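/- arXiv:2404.06045 — 4 statements merged into one kernel-verified Lean document; each statement's English description precedes it below -/
import Mathlib

section
/- Let k be an algebraically closed field of characteristic zero, let g be a finite-dimensional simple Lie algebra over k, and let A be a commutative associative unital k-algebra. Then every element z of the current Lie algebra g ⊗ A can be written as a sum of two Lie brackets: there exist x₁, y₁, x₂, y₂ ∈ g ⊗ A such that z = [x₁, y₁] + [x₂, y₂]. (In particular the bracket width of g ⊗ A is at most 2.) -/
open scoped TensorProduct

open LieAlgebra LieModule LieAlgebra.IsKilling in
/-- A finite-dimensional Lie algebra with non-degenerate Killing form is `[a, g] + [b, g]`. -/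
theorem exists_ad_range_sup_eq_top
    (k : Type*) [Field k] [IsAlgClosed k] [CharZero k]
    (L : Type*) [LieRing L] [LieAlgebra k L] [FiniteDimensional k L] [IsKilling k L] :
    ∃ a b : L, (ad k L a : L →ₗ[k] L).range ⊔ (ad k L b : L →ₗ[k] L).range = ⊤ := by
  classical
  have : Infinite k := IsAlgClosed.instInfinite
  obtain ⟨x0, hH⟩ := LieAlgebra.exists_isCartanSubalgebra_engel k L
  set H := LieSubalgebra.engel k x0 with hHdef
  clear_value H
  obtain ⟨h0, hh0⟩ : ∃ h0 : H, ∀ α : H.root, (α : Weight k H L).toLinear k H L h0 ≠ 0 := by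
    apply Module.Dual.exists_forall_ne_zero_of_forall_exists
    intro α
    have hα := LieSubalgebra.isNonZero_coe_root α
    by_contra! hcon
    exact hα (funext hcon)
  have hex : ∀ α : H.root, ∃ e f : L, ⁅e, f⁆ = (coroot (α : Weight k H L) : L) ∧
      e ∈ rootSpace H (α : Weight k H L) ∧ f ∈ rootSpace H (-(α : Weight k H L) : H → k) := by
    intro α
    have hα := LieSubalgebra.isNonZero_coe_root α
    obtain ⟨h, e, f, ht, he, hf⟩ := exists_isSl2Triple_of_weight_isNonZero hα
    exact ⟨e, f, by rw [ht.lie_e_f, ht.h_eq_coroot hα he hf], he, hf⟩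
  choose e f hef he hf using hex
  refine ⟨h0, ∑ α, e α, ?_⟩
  set W := (ad k L (h0 : L) : L →ₗ[k] L).range ⊔ (ad k L (∑ α, e α) : L →ₗ[k] L).range with hW
  have hroot : ∀ χ : H → k, χ ≠ 0 → ∀ x ∈ rootSpace H χ, x ∈ W := by
    intro χ hχ x hx
    by_cases hx0 : x = 0
    · rw [hx0]; exact W.zero_mem
    let α : Weight k H L := ⟨χ, fun hb => hx0 (by rw [rootSpace, hb] at hx; simpa using hx)⟩
    have hα : α.IsNonZero := hχ
    have h1 : χ h0 ≠ 0 := hh0 ⟨α, by simpa using hα⟩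
    refine Submodule.mem_sup_left ⟨(χ h0)⁻¹ • x, ?_⟩
    have h2 : ⁅(h0 : L), x⁆ = χ h0 • x := lie_eq_smul_of_mem_rootSpace hx h0
    rw [map_smul, ad_apply, h2, smul_smul, inv_mul_cancel₀ h1, one_smul]
  have hcoroot : ∀ α : H.root, (coroot (α : Weight k H L) : L) ∈ W := by
    intro α
    have h1 : ⁅∑ β, e β, f α⁆ ∈ W := Submodule.mem_sup_right ⟨f α, rfl⟩
    rw [sum_lie, ← Finset.add_sum_erase _ _ (Finset.mem_univ α), hef] at h1
    refine (W.add_mem_iff_left (W.sum_mem ?_)).mp h1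
    intro β hβ
    refine hroot _ ?_ _ (lie_mem_genWeightSpace_of_mem_genWeightSpace (he β) (hf α))
    intro h0
    apply Finset.ne_of_mem_erase hβ
    apply Subtype.ext
    apply DFunLike.coe_injective
    exact add_neg_eq_zero.mp h0
  have hcartan : ∀ h : H, (h : L) ∈ W := by
    have h1 : (⊤ : Submodule k H) ≤ W.comap H.toSubmodule.subtype := by
      rw [← RootPairing.IsRootSystem.span_coroot_eq_top (P := rootSystem H), Submodule.span_le]
      rintro _ ⟨α, rfl⟩
      exact hcoroot α
    exact fun h => h1 (Submodule.mem_top (x := h))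
  have htop := congrArg LieSubmodule.toSubmodule (cartan_sup_iSup_rootSpace_eq_top (K := k) (H := H))
  rw [LieSubmodule.top_toSubmodule] at htop
  rw [eq_top_iff, ← htop, LieSubmodule.sup_toSubmodule, sup_le_iff]
  refine ⟨fun x hx => hcartan ⟨x, hx⟩, ?_⟩
  simp only [LieSubmodule.iSup_toSubmodule, iSup_le_iff]
  intro α hα x hx
  exact hroot α hα x hx

/-- The bracket width of a current Lie algebra `𝔤 ⊗ A` is at most 2: every element is
a sum of two Lie brackets. -/
theorem current_algebra_width_le_two
    (k : Type*) [Field k] [IsAlgClosed k] [CharZero k]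
    (𝔤 : Type*) [LieRing 𝔤] [LieAlgebra k 𝔤] [FiniteDimensional k 𝔤]
    [LieAlgebra.IsSimple k 𝔤]
    (A : Type*) [CommRing A] [Algebra k A]
    (z : A ⊗[k] 𝔤) :
    ∃ x₁ y₁ x₂ y₂ : A ⊗[k] 𝔤, z = ⁅x₁, y₁⁆ + ⁅x₂, y₂⁆ := by
  obtain ⟨a, b, hab⟩ := exists_ad_range_sup_eq_top k 𝔤
  suffices h : ∃ y₁ y₂ : A ⊗[k] 𝔤, z = ⁅(1 : A) ⊗ₜ[k] a, y₁⁆ + ⁅(1 : A) ⊗ₜ[k] b, y₂⁆ by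
    obtain ⟨y₁, y₂, h⟩ := h
    exact ⟨_, y₁, _, y₂, h⟩
  induction z using TensorProduct.induction_on with
  | zero => exact ⟨0, 0, by simp⟩
  | tmul c x =>
    have hx : x ∈ (⊤ : Submodule k 𝔤) := Submodule.mem_top
    rw [← hab, Submodule.mem_sup] at hx
    obtain ⟨_, ⟨u, rfl⟩, _, ⟨v, rfl⟩, rfl⟩ := hx
    exact ⟨c ⊗ₜ u, c ⊗ₜ v, by
      simp [LieAlgebra.ExtendScalars.bracket_tmul, TensorProduct.tmul_add]⟩
  | add z w hz hw =>
    obtain ⟨y₁, y₂, rfl⟩ := hz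
    obtain ⟨y₃, y₄, rfl⟩ := hw
    exact ⟨y₁ + y₃, y₂ + y₄, by rw [lie_add, lie_add]; abel⟩
end

section
/- Let k be an algebraically closed field of characteristic zero, let g be a finite-dimensional simple Lie algebra over k, and let A be a commutative associative unital k-algebra. Then there exist elements w₁, w₂ ∈ g such that every z ∈ g ⊗ A can be written z = [w₁ ⊗ 1, x] + [w₂ ⊗ 1, y] for some x, y ∈ g ⊗ A. -/
open scoped TensorProduct

open LieAlgebra LieModule in
/-- Two elements of `𝔤` with trivial common centralizer. -/
theorem exists_two_trivial_centralizer
    (k : Type*) [Field k] [IsAlgClosed k] [CharZero k]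
    (𝔤 : Type*) [LieRing 𝔤] [LieAlgebra k 𝔤] [FiniteDimensional k 𝔤]
    [LieAlgebra.IsKilling k 𝔤] :
    ∃ w₁ w₂ : 𝔤, ∀ v : 𝔤, ⁅w₁, v⁆ = 0 → ⁅w₂, v⁆ = 0 → v = 0 := by
  have : Infinite k := inferInstance
  obtain ⟨w₁, hw₁⟩ := exists_isCartanSubalgebra_engel k 𝔤
  generalize hH : LieSubalgebra.engel k w₁ = H at hw₁
  choose e he he0 using fun α : Weight k H 𝔤 => α.exists_ne_zero
  have : Fintype (Weight k H 𝔤) := Fintype.ofFinite _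
  refine ⟨w₁, ∑ α, e α, fun v h1 h2 => ?_⟩
  have hv : v ∈ H := by
    rw [← hH, LieSubalgebra.mem_engel_iff]
    exact ⟨1, by simpa using h1⟩
  have hind : LinearIndependent k e :=
    (LieSubmodule.iSupIndep_toSubmodule.mpr
      (iSupIndep_genWeightSpace' k H 𝔤)).linearIndependent _ he he0
  have hsum : ∑ α : Weight k H 𝔤, α ⟨v, hv⟩ • e α = 0 := by
    have h3 : ⁅v, ∑ α, e α⁆ = 0 := by rw [← lie_skew, h2, neg_zero]
    rw [← h3, lie_sum]
    refine Finset.sum_congr rfl fun α _ => ?_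
    exact (IsKilling.lie_eq_smul_of_mem_rootSpace (he α) ⟨v, hv⟩).symm
  have hz := Fintype.linearIndependent_iff.mp hind _ hsum
  have hmem : (⟨v, hv⟩ : H) ∈ ⨅ α : Weight k H 𝔤, α.ker := by
    rw [Submodule.mem_iInf]
    intro α
    simpa using hz α
  rw [IsKilling.iInf_ker_weight_eq_bot, Submodule.mem_bot] at hmem
  exact congrArg Subtype.val hmem

/-- Two elements whose adjoint images span `𝔤`. -/
theorem exists_two_ad_range
    (k : Type*) [Field k] [IsAlgClosed k] [CharZero k]
    (𝔤 : Type*) [LieRing 𝔤] [LieAlgebra k 𝔤] [FiniteDimensional k 𝔤]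
    [LieAlgebra.IsKilling k 𝔤] :
    ∃ w₁ w₂ : 𝔤, ∀ z : 𝔤, ∃ x y : 𝔤, z = ⁅w₁, x⁆ + ⁅w₂, y⁆ := by
  obtain ⟨w₁, w₂, h⟩ := exists_two_trivial_centralizer k 𝔤
  refine ⟨w₁, w₂, ?_⟩
  have hnd := LieAlgebra.IsKilling.killingForm_nondegenerate k 𝔤
  let P := LinearMap.range (LieAlgebra.ad k 𝔤 w₁) ⊔ LinearMap.range (LieAlgebra.ad k 𝔤 w₂)
  have hP : P = ⊤ := by
    by_contra hne
    obtain ⟨φ, hφ, hle⟩ := Submodule.exists_le_ker_of_lt_top P (lt_top_iff_ne_top.mpr hne)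
    obtain ⟨v, rfl⟩ := (LinearMap.BilinForm.toDual (killingForm k 𝔤) hnd).surjective φ
    have key : ∀ w : 𝔤, (∀ x, ⁅w, x⁆ ∈ P) → ⁅w, v⁆ = 0 := by
      intro w hw
      rw [← lie_skew, neg_eq_zero]
      refine hnd.1 _ fun x => ?_
      have := hle (hw x)
      rw [LinearMap.mem_ker, LinearMap.BilinForm.toDual_def] at this
      rw [← this]
      exact LieModule.traceForm_apply_lie_apply k 𝔤 𝔤 v w x
    have hv : v = 0 := h v
      (key _ fun x => Submodule.mem_sup_left ⟨x, rfl⟩)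
      (key _ fun x => Submodule.mem_sup_right ⟨x, rfl⟩)
    exact hφ (by rw [hv, map_zero])
  intro z
  have hz : z ∈ P := hP ▸ Submodule.mem_top
  obtain ⟨_, ⟨x, rfl⟩, _, ⟨y, rfl⟩, hxy⟩ := Submodule.mem_sup.mp hz
  exact ⟨x, y, hxy.symm⟩

/-- There exist `w₁ w₂ ∈ 𝔤` such that every element of the current Lie algebra `𝔤 ⊗ A`
is of the form `⁅w₁ ⊗ 1, x⁆ + ⁅w₂ ⊗ 1, y⁆`. -/
theorem current_algebra_two_generators
    (k : Type*) [Field k] [IsAlgClosed k] [CharZero k]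
    (𝔤 : Type*) [LieRing 𝔤] [LieAlgebra k 𝔤] [FiniteDimensional k 𝔤]
    [LieAlgebra.IsSimple k 𝔤]
    (A : Type*) [CommRing A] [Algebra k A] :
    ∃ w₁ w₂ : 𝔤, ∀ z : A ⊗[k] 𝔤, ∃ x y : A ⊗[k] 𝔤,
      z = ⁅(1 : A) ⊗ₜ[k] w₁, x⁆ + ⁅(1 : A) ⊗ₜ[k] w₂, y⁆ := by
  obtain ⟨w₁, w₂, h⟩ := exists_two_ad_range k 𝔤
  refine ⟨w₁, w₂, fun z => ?_⟩
  induction z using TensorProduct.induction_on with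
  | zero => exact ⟨0, 0, by simp⟩
  | tmul a g =>
    obtain ⟨x, y, rfl⟩ := h g
    refine ⟨a ⊗ₜ x, a ⊗ₜ y, ?_⟩
    simp [TensorProduct.tmul_add]
  | add z₁ z₂ h₁ h₂ =>
    obtain ⟨x₁, y₁, e₁⟩ := h₁
    obtain ⟨x₂, y₂, e₂⟩ := h₂
    refine ⟨x₁ + x₂, y₁ + y₂, ?_⟩
    rw [lie_add, lie_add, e₁, e₂]
    abel
end

section
/- Let k be an algebraically closed field of characteristic zero and g a finite-dimensional simple Lie algebra over k. Every element of the current Lie algebra g ⊗ k[[t]] (with k[[t]] the ring of formal power series) is a single Lie bracket if and only if g satisfies condition (*): every nonzero c ∈ g can be written c = [a, b] for some a, b ∈ g with C_g(a) ∩ C_g(b) = 0. -/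
open scoped TensorProduct

namespace WidthOne

section PS

variable {k : Type*} [Field k] {L : Type*} [LieRing L] [LieAlgebra k L]

/-- The `n`-th coefficient of an element of the current algebra. -/
noncomputable def cf (k : Type*) [Field k] (L : Type*) [LieRing L] [LieAlgebra k L] (n : ℕ) :
    PowerSeries k ⊗[k] L →ₗ[k] L :=
  (TensorProduct.lid k L).toLinearMap ∘ₗ (LinearMap.rTensor L (PowerSeries.coeff (R := k) n))

lemma cf_tmul (n : ℕ) (p : PowerSeries k) (x : L) :
    cf k L n (p ⊗ₜ[k] x) = PowerSeries.coeff n p • x := by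
  simp [cf]

lemma t_zero_lie (y : PowerSeries k ⊗[k] L) : ⁅(0 : PowerSeries k ⊗[k] L), y⁆ = 0 :=
  zero_lie (L := PowerSeries k ⊗[k] L) y

lemma t_lie_zero (y : PowerSeries k ⊗[k] L) : ⁅y, (0 : PowerSeries k ⊗[k] L)⁆ = 0 :=
  lie_zero (L := PowerSeries k ⊗[k] L) y

lemma t_add_lie (x x' y : PowerSeries k ⊗[k] L) : ⁅x + x', y⁆ = ⁅x, y⁆ + ⁅x', y⁆ :=
  add_lie (L := PowerSeries k ⊗[k] L) x x' y

lemma t_lie_add (y x x' : PowerSeries k ⊗[k] L) : ⁅y, x + x'⁆ = ⁅y, x⁆ + ⁅y, x'⁆ :=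
  lie_add (L := PowerSeries k ⊗[k] L) y x x'

lemma t_smul_lie (p : PowerSeries k) (x y : PowerSeries k ⊗[k] L) : ⁅p • x, y⁆ = p • ⁅x, y⁆ :=
  smul_lie (L := PowerSeries k ⊗[k] L) p x y

lemma cf_lie (n : ℕ) (x y : PowerSeries k ⊗[k] L) :
    cf k L n ⁅x, y⁆ = ∑ p ∈ Finset.HasAntidiagonal.antidiagonal n, ⁅cf k L p.1 x, cf k L p.2 y⁆ := by
  induction x using TensorProduct.induction_on with
  | zero => simp [t_zero_lie, t_lie_zero]
  | add x₁ x₂ h₁ h₂ => simp [t_add_lie, h₁, h₂, Finset.sum_add_distrib]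
  | tmul p u =>
    induction y using TensorProduct.induction_on with
    | zero => simp [t_zero_lie, t_lie_zero]
    | add x₁ x₂ h₁ h₂ => simp [t_lie_add, h₁, h₂, Finset.sum_add_distrib]
    | tmul q v =>
      simp only [LieAlgebra.ExtendScalars.bracket_tmul, cf_tmul, PowerSeries.coeff_mul,
        Finset.sum_smul, smul_lie, lie_smul, smul_smul, mul_comm]

lemma cf_X_pow_smul (m n : ℕ) (x : PowerSeries k ⊗[k] L) :
    cf k L n ((PowerSeries.X ^ m : PowerSeries k) • x) = if m ≤ n then cf k L (n - m) x else 0 := by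
  induction x using TensorProduct.induction_on with
  | zero => simp
  | add x₁ x₂ h₁ h₂ => simp only [smul_add, map_add, h₁, h₂]; split_ifs <;> simp
  | tmul p u =>
    rw [TensorProduct.smul_tmul', cf_tmul, cf_tmul, smul_eq_mul, PowerSeries.coeff_X_pow_mul']
    split_ifs <;> simp

variable [FiniteDimensional k L]

lemma cf_ext (x y : PowerSeries k ⊗[k] L) (h : ∀ n, cf k L n x = cf k L n y) : x = y := by
  let b := Module.finBasis k L
  apply (TensorProduct.equivFinsuppOfBasisRight b).injective
  have key : ∀ (z : PowerSeries k ⊗[k] L) i n,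
      PowerSeries.coeff n (TensorProduct.equivFinsuppOfBasisRight b z i) =
        b.repr (cf k L n z) i := by
    intro z i n
    induction z using TensorProduct.induction_on with
    | zero => simp
    | add x₁ x₂ h₁ h₂ => simp [h₁, h₂]
    | tmul p u => simp [cf_tmul, mul_comm]
  ext i n
  rw [key, key, h]

lemma exists_cf (s : ℕ → L) : ∃ x : PowerSeries k ⊗[k] L, ∀ n, cf k L n x = s n := by
  let b := Module.finBasis k L
  refine ⟨∑ i, (PowerSeries.mk fun n => b.repr (s n) i) ⊗ₜ[k] b i, fun n => ?_⟩
  simp [cf_tmul, b.sum_repr]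

/-- Recursive solution of `[x, y] = z`. -/
noncomputable def sq (a b : L) (D : L → L × L) (z : ℕ → L) : ℕ → L × L
  | 0 => (a, b)
  | n + 1 => D (z (n + 1) - ∑ i : Fin n, ⁅(sq a b D z (i + 1)).1, (sq a b D z (n - i)).2⁆)
termination_by n => n
decreasing_by all_goals omega

lemma solve (a b : L) (D : L → L × L) (hD : ∀ w, ⁅a, (D w).2⁆ + ⁅(D w).1, b⁆ = w) (z : ℕ → L)
    (hz : z 0 = ⁅a, b⁆) (n : ℕ) :
    ∑ p ∈ Finset.HasAntidiagonal.antidiagonal n, ⁅(sq a b D z p.1).1, (sq a b D z p.2).2⁆ = z n := by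
  rcases n with _ | n
  · simp [sq, hz]
  · have h0 : sq a b D z 0 = (a, b) := by rw [sq]
    rw [Finset.Nat.sum_antidiagonal_eq_sum_range_succ
      (fun i j => ⁅(sq a b D z i).1, (sq a b D z j).2⁆), Finset.sum_range_succ,
      Finset.sum_range_succ']
    simp only [Nat.sub_self, h0, Nat.sub_zero]
    have h1 := hD (z (n + 1) - ∑ i : Fin n, ⁅(sq a b D z (i + 1)).1, (sq a b D z (n - i)).2⁆)
    have h2 : sq a b D z (n + 1) =
      D (z (n + 1) - ∑ i : Fin n, ⁅(sq a b D z (i + 1)).1, (sq a b D z (n - i)).2⁆) := by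
      rw [sq]
    rw [← h2] at h1
    rw [add_assoc, h1, Finset.sum_range]
    simp only [Nat.add_sub_add_right]
    abel

end PS

section K

variable {k : Type*} [Field k] {L : Type*} [LieRing L] [LieAlgebra k L] [FiniteDimensional k L]
  [LieAlgebra.IsKilling k L]

lemma functional (f : Module.Dual k L) : ∃ x : L, ∀ y, f y = killingForm k L x y := by
  let e := (killingForm k L).toDual (LieAlgebra.IsKilling.killingForm_nondegenerate k L)
  refine ⟨e.symm f, fun y => ?_⟩
  have : e (e.symm f) y = f y := by rw [LinearEquiv.apply_symm_apply]
  rw [← this]; rfl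

lemma nondeg (x : L) (h : ∀ y, killingForm k L x y = 0) : x = 0 := by
  have := (LieAlgebra.IsKilling.killingForm_nondegenerate k L).1
  exact this x h

lemma kinv (x y z : L) : killingForm k L ⁅x, y⁆ z = killingForm k L x ⁅y, z⁆ :=
  LieModule.traceForm_apply_lie_apply k L L x y z

lemma ksymm (x y : L) : killingForm k L x y = killingForm k L y x :=
  LieModule.traceForm_comm k L L x y

lemma surj (k : Type*) [Field k] {L : Type*} [LieRing L] [LieAlgebra k L] [FiniteDimensional k L]
  [LieAlgebra.IsKilling k L] (a b : L) (h : ∀ x : L, ⁅a, x⁆ = 0 → ⁅b, x⁆ = 0 → x = 0) (w : L) :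
    ∃ p : L × L, ⁅a, p.2⁆ + ⁅p.1, b⁆ = w := by
  have : w ∈ LinearMap.range (LieAlgebra.ad k L a) ⊔ LinearMap.range (LieAlgebra.ad k L b) := by
    by_contra hw
    obtain ⟨f, hf, hf2⟩ := Submodule.exists_dual_map_eq_bot_of_notMem hw inferInstance
    obtain ⟨x, hx⟩ := functional f
    have hv : ∀ v ∈ LinearMap.range (LieAlgebra.ad k L a) ⊔ LinearMap.range (LieAlgebra.ad k L b),
        f v = 0 := fun v hv => by
      have : f v ∈ Submodule.map f _ := Submodule.mem_map_of_mem hv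
      rw [hf2] at this; simpa using this
    have key : ∀ c : L, (LinearMap.range (LieAlgebra.ad k L c) ≤
        LinearMap.range (LieAlgebra.ad k L a) ⊔ LinearMap.range (LieAlgebra.ad k L b)) →
        ⁅c, x⁆ = 0 := by
      intro c hc
      rw [← lie_skew, neg_eq_zero]
      apply nondeg (k := k)
      intro y
      rw [kinv, ← hx]
      exact hv _ (hc ⟨y, rfl⟩)
    have := h x (key a le_sup_left) (key b le_sup_right)
    apply hf
    rw [hx, this]; simp
  obtain ⟨_, ⟨p, rfl⟩, _, ⟨q, rfl⟩, h⟩ := Submodule.mem_sup.1 this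
  exact ⟨(-q, p), by simpa using h⟩

lemma star_imp_width
    (h : ∀ c : L, c ≠ 0 → ∃ a b : L, c = ⁅a, b⁆ ∧
        ∀ x : L, ⁅a, x⁆ = 0 → ⁅b, x⁆ = 0 → x = 0)
    (z : PowerSeries k ⊗[k] L) : ∃ x y : PowerSeries k ⊗[k] L, z = ⁅x, y⁆ := by
  classical
  by_cases hz : ∃ n, cf k L n z ≠ 0
  swap
  · push Not at hz
    exact ⟨0, 0, cf_ext _ _ fun n => by simp [hz, t_zero_lie]⟩
  let m := Nat.find hz
  obtain ⟨a, b, hab, hc⟩ := h _ (Nat.find_spec hz)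
  choose D hD using surj k a b hc
  let z' : ℕ → L := fun n => cf k L (n + m) z
  have hs := solve a b D hD z' (by simpa [z'] using hab)
  obtain ⟨x, hx⟩ := exists_cf (k := k) fun n => (sq a b D z' n).1
  obtain ⟨y, hy⟩ := exists_cf (k := k) fun n => (sq a b D z' n).2
  refine ⟨(PowerSeries.X ^ m : PowerSeries k) • x, y, cf_ext _ _ fun n => ?_⟩
  rw [t_smul_lie, cf_X_pow_smul, cf_lie]
  simp only [hx, hy, hs, z']
  split_ifs with hmn
  · rw [Nat.sub_add_cancel hmn]
  · by_contra hne
    exact hmn (Nat.find_min' hz hne)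

end K


section Expo

open LieAlgebra

variable {k : Type*} [Field k] [CharZero k] {L : Type*} [LieRing L] [LieAlgebra k L]
  [FiniteDimensional k L]

lemma exists_exp (e : L) (he : IsNilpotent (ad k L e)) :
    ∃ (φ : L ≃ₗ⁅k⁆ L) (N : ℕ), ∀ y, φ y =
      y + ⁅e, y⁆ + (2 : k)⁻¹ • ⁅e, ⁅e, y⁆⁆ +
        ∑ n ∈ Finset.range N, ((n + 3).factorial : k)⁻¹ • ((ad k L e) ^ (n + 3)) y := by
  letI : Module ℚ L := Module.compHom L (algebraMap ℚ k)
  have hs : ∀ (q : ℚ) (x : L), q • x = (algebraMap ℚ k q) • x := fun q x => rfl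
  letI : LieAlgebra ℚ L := { lie_smul := fun q x y => by rw [hs, hs, lie_smul] }
  let D : LieDerivation k L L := LieDerivation.ad k L e
  have hD : D.toLinearMap = ad k L e := by ext y; simp [D]
  obtain ⟨N, hN⟩ := he
  have hN' : D.toLinearMap ^ (N + 3) = 0 := by rw [hD, pow_add, hN, zero_mul]
  have hnil : IsNilpotent D.toLinearMap := ⟨_, hN'⟩
  refine ⟨D.exp hnil, N, fun y => (LieDerivation.exp_map_apply D hnil y).trans ?_⟩
  rw [IsNilpotent.exp_eq_sum hN', hD, LinearMap.sum_apply]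
  simp only [Finset.sum_range_succ' _ (N + 2), Finset.sum_range_succ' _ (N + 1),
    Finset.sum_range_succ' _ N, LinearMap.smul_apply, hs, map_inv₀, map_natCast]
  simp [Nat.factorial, pow_succ]
  abel

end Expo

section Root

open LieAlgebra LieAlgebra.IsKilling LieModule Module

variable {k : Type*} [Field k] [CharZero k] {L : Type*} [LieRing L] [LieAlgebra k L]
  [FiniteDimensional k L] [IsKilling k L]
  {H : LieSubalgebra k L} [H.IsCartanSubalgebra] [IsTriangularizable k H L]

lemma nondeg_span (T : Set H.root) (l : Dual k H)
    (hl : l ∈ Submodule.span k ((rootSystem H).root '' T))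
    (h : ∀ i ∈ T, l (coroot (i : Weight k H L)) = 0) : l = 0 := by
  classical
  set P := rootSystem H with hP
  obtain ⟨a, haT, rfl⟩ := (Finsupp.mem_span_image_iff_linearCombination k).1 hl
  rw [Finsupp.mem_supported] at haT
  have hc : ∀ (b : H.root →₀ k) (j : H.root), (Finsupp.linearCombination k P.root b) (coroot j.1) =
      b.sum fun i c => c * (P.pairingIn ℤ i j : k) := by
    intro b j
    rw [Finsupp.linearCombination_apply, Finsupp.sum, LinearMap.sum_apply]
    refine Finset.sum_congr rfl fun i _ => ?_
    beta_reduce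
    have : ((P.pairingIn ℤ i j : ℤ) : k) = P.pairing i j := P.algebraMap_pairingIn ℤ i j
    rw [this]; rfl
  -- rational version
  have hrat : ∀ b : H.root →₀ ℚ, ↑b.support ⊆ T →
      (∀ j ∈ T, b.sum (fun i c => c * (P.pairingIn ℤ i j : ℚ)) = 0) →
      ∀ j, b.sum (fun i c => c * (P.pairingIn ℤ i j : ℚ)) = 0 := by
    intro b hbT hb
    let v : Dual k H := b.sum fun i c => (c : k) • P.root i
    have hv : ∀ j, P.coroot' j v = ((b.sum (fun i c => c * (P.pairingIn ℤ i j : ℚ)) : ℚ) : k) := by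
      intro j
      simp only [v, Finsupp.sum, map_sum, map_smul, Rat.cast_sum, Rat.cast_mul, Rat.cast_intCast,
        smul_eq_mul]
      refine Finset.sum_congr rfl fun i _ => ?_
      have : ((P.pairingIn ℤ i j : ℤ) : k) = P.pairing i j := P.algebraMap_pairingIn ℤ i j
      rw [this]; simp
    have hB : ∀ j ∈ T, P.RootForm v (P.root j) = 0 := by
      intro j hj
      have h0 : P.coroot' j v = 0 := by rw [hv, hb j hj, Rat.cast_zero]
      have h1 := P.rootForm_reflection_reflection_apply j v (P.root j)
      rw [P.reflection_apply, h0, P.reflection_apply_self, zero_smul, sub_zero, map_neg] at h1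
      exact self_eq_neg.1 h1.symm
    have hvv : P.RootForm v v = 0 := by
      conv_lhs => rw [show v = b.sum fun i c => (c : k) • P.root i from rfl]
      rw [← show v = b.sum fun i c => (c : k) • P.root i from rfl]
      have : P.RootForm v (b.sum fun i c => (c : k) • P.root i) = 0 := by
        simp only [Finsupp.sum, map_sum, map_smul]
        exact Finset.sum_eq_zero fun i hi => by rw [hB i (hbT hi), smul_zero]
      exact this
    rw [P.rootForm_apply_apply] at hvv
    simp only [hv] at hvv
    have h2 : ∑ j, (b.sum (fun i c => c * (P.pairingIn ℤ i j : ℚ))) *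
        (b.sum (fun i c => c * (P.pairingIn ℤ i j : ℚ))) = 0 := by exact_mod_cast hvv
    intro j
    rw [Finset.sum_eq_zero_iff_of_nonneg (fun i _ => mul_self_nonneg _)] at h2
    exact mul_self_eq_zero.1 (h2 j (Finset.mem_univ _))
  -- descend
  have hall : ∀ j, a.sum (fun i c => c * (P.pairingIn ℤ i j : k)) = 0 := by
    intro j
    rw [← Module.forall_dual_apply_eq_zero_iff ℚ]
    intro f
    have hf : ∀ j, f (a.sum (fun i c => c * (P.pairingIn ℤ i j : k))) =
        (a.mapRange f (map_zero f)).sum (fun i c => c * (P.pairingIn ℤ i j : ℚ)) := by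
      intro j
      rw [Finsupp.sum_mapRange_index (by simp), Finsupp.sum, map_sum, Finsupp.sum]
      refine Finset.sum_congr rfl fun i _ => ?_
      rw [mul_comm, ← zsmul_eq_mul, map_zsmul, zsmul_eq_mul, mul_comm]
    rw [hf]
    refine hrat _ (fun i hi => haT (Finsupp.support_mapRange hi)) (fun i hi => ?_) j
    rw [← hf, ← hc, h i hi, map_zero]
  have hsp : ∀ x : H, Finsupp.linearCombination k P.root a x = 0 := by
    intro x
    have hx : x ∈ Submodule.span k (Set.range P.coroot) := by
      rw [RootPairing.IsRootSystem.span_coroot_eq_top]; trivial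
    induction hx using Submodule.span_induction with
    | mem x hx => obtain ⟨j, rfl⟩ := hx; exact (hc a j).trans (hall j)
    | zero => simp
    | add x y _ _ h1 h2 => rw [map_add, h1, h2, add_zero]
    | smul r x _ h => rw [map_smul, h, smul_zero]
  exact LinearMap.ext hsp

end Root

section Phase

open LieAlgebra LieAlgebra.IsKilling LieModule Module

variable {k : Type*} [Field k] [CharZero k] {L : Type*} [LieRing L] [LieAlgebra k L]
  [FiniteDimensional k L] [IsKilling k L]
  {H : LieSubalgebra k L} [H.IsCartanSubalgebra] [IsTriangularizable k H L]

lemma kconj (φ : L ≃ₗ⁅k⁆ L) (c y : L) :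
    killingForm k L (φ.symm c) y = killingForm k L c (φ y) := by
  rw [← killingForm_of_equiv_apply φ (φ.symm c) y, LieEquiv.apply_symm_apply]

lemma exp_H {μ : H → k} (hμ : μ ≠ 0) {e : L} (he : e ∈ rootSpace H μ) :
    ∃ (φ : L ≃ₗ⁅k⁆ L), (∀ u : H, φ (u : L) = u - μ u • e) ∧
      ∀ f, ⁅e, ⁅e, ⁅e, f⁆⁆⁆ = 0 → φ f = f + ⁅e, f⁆ + (2 : k)⁻¹ • ⁅e, ⁅e, f⁆⁆ := by
  obtain ⟨φ, N, hφ⟩ := exists_exp (k := k) e (isNilpotent_ad_of_mem_rootSpace H hμ he)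
  have h3 : ∀ f, ⁅e, ⁅e, ⁅e, f⁆⁆⁆ = 0 → φ f = f + ⁅e, f⁆ + (2 : k)⁻¹ • ⁅e, ⁅e, f⁆⁆ := by
    intro f hf
    rw [hφ, Finset.sum_eq_zero, add_zero]
    intro n _
    rw [pow_add, Module.End.mul_apply]
    have : (ad k L e ^ 3) f = 0 := by simpa [pow_succ] using hf
    rw [this, map_zero, smul_zero]
  refine ⟨φ, fun u => ?_, h3⟩
  have h1 : ⁅e, (u : L)⁆ = - (μ u • e) := by
    rw [← lie_skew]
    congr 1
    exact lie_eq_smul_of_mem_rootSpace he u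
  rw [h3 _ (by simp [h1]), h1]
  simp [sub_eq_add_neg]

lemma step1 {μ : H → k} (hμ : μ ≠ 0) {e : L} (he : e ∈ rootSpace H μ) (c : L) (s : k)
    (p : H → Prop) (hc : killingForm k L c e ≠ 0)
    (hp : ∀ u : H, p u → killingForm k L c u = s * μ u) :
    ∃ φ : L ≃ₗ⁅k⁆ L, ∀ u : H, p u → killingForm k L (φ c) u = 0 := by
  obtain ⟨φ, hφ, -⟩ := exp_H hμ (Submodule.smul_mem _ (s / killingForm k L c e) he)
  refine ⟨φ.symm, fun u hu => ?_⟩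
  rw [kconj, hφ, map_sub, hp u hu, map_smul, map_smul]
  simp only [smul_eq_mul]
  field_simp
  ring

lemma phase1 (n : ℕ) : ∀ (T : Set H.root),
    finrank k (Submodule.span k ((rootSystem H).root '' T)) ≤ n → ∀ c : L,
    (∀ u : H, (∀ i ∈ T, (i : Weight k H L) u = 0) → killingForm k L c u = 0) →
    ∃ φ : L ≃ₗ⁅k⁆ L, ∀ u : H, killingForm k L (φ c) u = 0 := by
  induction n with
  | zero =>
    intro T hT c hc
    refine ⟨LieEquiv.refl, fun u => hc u fun i hi => ?_⟩
    have h0 : Submodule.span k ((rootSystem H).root '' T) = ⊥ :=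
      Submodule.finrank_eq_zero.1 (Nat.le_zero.1 hT)
    rw [Submodule.span_eq_bot] at h0
    have := h0 _ ⟨i, hi, rfl⟩
    exact DFunLike.congr_fun this u
  | succ n ih =>
    intro T hT c hc
    by_cases hall : ∀ u : H, killingForm k L c u = 0
    · exact ⟨LieEquiv.refl, hall⟩
    let l : Dual k H := (killingForm k L c) ∘ₗ H.toSubmodule.subtype
    have hl : ∀ u : H, l u = killingForm k L c u := fun u => rfl
    have hlT : l ∈ Submodule.span k ((rootSystem H).root '' T) := by
      rw [← Subspace.dualCoannihilator_dualAnnihilator_eq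
        (W := Submodule.span k ((rootSystem H).root '' T)), Submodule.mem_dualAnnihilator]
      intro u hu
      rw [Submodule.mem_dualCoannihilator] at hu
      exact hc u fun i hi => hu _ (Submodule.subset_span ⟨i, hi, rfl⟩)
    have hex : ∃ β ∈ T, l (coroot (β : Weight k H L)) ≠ 0 := by
      by_contra! hno
      have := nondeg_span T l hlT hno
      exact hall fun u => by rw [← hl, this]; rfl
    obtain ⟨β, hβT, hβ⟩ := hex
    have hβ0 : (β : Weight k H L).IsNonZero := H.isNonZero_coe_root β
    obtain ⟨b, hbT, hβb, hTb, hbli⟩ := exists_linearIndepOn_extension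
      (K := k) (v := (rootSystem H).root) (s := {β}) (t := T)
      (LinearIndepOn.singleton ((rootSystem H).ne_zero β)) (by simpa using hβT)
    have hb' : b = insert β (b \ {β}) := by
      rw [Set.insert_sdiff_singleton, Set.insert_eq_of_mem (hβb rfl)]
    have hnot : (rootSystem H).root β ∉
        Submodule.span k ((rootSystem H).root '' (b \ {β})) :=
      hbli.notMem_span (hβb rfl)
    have hrank : finrank k (Submodule.span k ((rootSystem H).root '' (b \ {β}))) ≤ n := by
      have : Submodule.span k ((rootSystem H).root '' (b \ {β})) <
          Submodule.span k ((rootSystem H).root '' T) := by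
        refine lt_of_le_of_ne (Submodule.span_mono (Set.image_mono
          (Set.sdiff_subset.trans hbT))) fun heq => hnot ?_
        rw [heq]
        exact Submodule.subset_span ⟨β, hβT, rfl⟩
      have := Submodule.finrank_lt_finrank_of_lt this
      omega
    have hl' : l ∈ Submodule.span k (insert ((rootSystem H).root β)
        ((rootSystem H).root '' (b \ {β}))) := by
      rw [← Set.image_insert_eq, ← hb']
      exact Submodule.span_le.2 hTb hlT
    obtain ⟨s, w, hw, hls⟩ := Submodule.mem_span_insert.1 hl'
    have hp : ∀ u : H, (∀ i ∈ b \ {β}, (i : Weight k H L) u = 0) →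
        killingForm k L c u = s * (β : Weight k H L) u := by
      intro u hu
      rw [← hl, hls]
      have hw0 : ∀ w ∈ Submodule.span k ((rootSystem H).root '' (b \ {β})), w u = 0 := by
        intro w hw
        induction hw using Submodule.span_induction with
        | mem x hx => obtain ⟨j, hj, rfl⟩ := hx; exact hu j hj
        | zero => simp
        | add x y _ _ h1 h2 => rw [LinearMap.add_apply, h1, h2, add_zero]
        | smul r x _ h => rw [LinearMap.smul_apply, h, smul_zero]
      rw [LinearMap.add_apply, hw0 w hw, add_zero]; rfl
    have fin : ∀ c' : L, (∃ ψ : L ≃ₗ⁅k⁆ L, c' = ψ c) →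
        (∃ φ : L ≃ₗ⁅k⁆ L, ∀ u : H, (∀ i ∈ b \ {β}, (i : Weight k H L) u = 0) →
          killingForm k L (φ c') u = 0) →
        ∃ φ : L ≃ₗ⁅k⁆ L, ∀ u : H, killingForm k L (φ c) u = 0 := by
      rintro _ ⟨ψ, rfl⟩ ⟨φ, hφ⟩
      obtain ⟨χ, hχ⟩ := ih _ hrank _ hφ
      exact ⟨(ψ.trans φ).trans χ, hχ⟩
    obtain ⟨h, e, f, ht, he, hf⟩ := exists_isSl2Triple_of_weight_isNonZero hβ0
    have hh := ht.h_eq_coroot hβ0 he hf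
    have hβ1 : ((β : Weight k H L) : H → k) ≠ 0 := hβ0
    have hβ2 : (-(β : Weight k H L) : H → k) ≠ 0 := neg_ne_zero.2 hβ1
    by_cases hce : killingForm k L c e = 0
    swap
    · exact fin c ⟨LieEquiv.refl, rfl⟩ (step1 hβ1 he c s _ hce hp)
    by_cases hcf : killingForm k L c f = 0
    swap
    · exact fin c ⟨LieEquiv.refl, rfl⟩ (step1 hβ2 hf c (-s) _ hcf fun u hu => by
        rw [hp u hu]; simp)
    obtain ⟨ψ, hψ1, hψ2⟩ := exp_H hβ1 he
    refine fin (ψ.symm c) ⟨ψ.symm, rfl⟩ (step1 hβ2 hf _ (-s) _ ?_ fun u hu => ?_)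
    · have h2 : ⁅e, ⁅e, f⁆⁆ = - (2 • e) := by
        rw [ht.lie_e_f, ← lie_skew, ht.lie_h_e_nsmul]
      rw [kconj, hψ2 f (by rw [h2]; simp), h2, ht.lie_e_f]
      simp only [map_add, map_smul, map_neg, map_nsmul, hce, hcf]
      simpa [hh, hl] using hβ
    · rw [kconj, hψ1, map_sub, map_smul, hce, hp u hu]; simp

end Phase

section Phase2

open LieAlgebra LieAlgebra.IsKilling LieModule Module

variable {k : Type*} [Field k] [CharZero k] {L : Type*} [LieRing L] [LieAlgebra k L]
  [FiniteDimensional k L] [IsKilling k L]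
  {H : LieSubalgebra k L} [H.IsCartanSubalgebra] [IsTriangularizable k H L]

/-- The span of the support of `c`. -/
def sp (H : LieSubalgebra k L) [H.IsCartanSubalgebra] (c : L) : Submodule k (Dual k H) :=
  Submodule.span k {f | ∃ y ∈ rootSpace H f, killingForm k L c y ≠ 0}

lemma sp_mem {c : L} {f : Dual k H} {y : L} (hy : y ∈ rootSpace H f)
    (h : killingForm k L c y ≠ 0) : f ∈ sp H c :=
  Submodule.subset_span ⟨y, hy, h⟩

lemma sp_not {c : L} {f : Dual k H} {y : L} (hf : f ∉ sp H c) (hy : y ∈ rootSpace H f) :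
    killingForm k L c y = 0 := by
  by_contra h
  exact hf (sp_mem hy h)

lemma kext (H : LieSubalgebra k L) [H.IsCartanSubalgebra] [IsTriangularizable k H L] (c : L)
    (h : ∀ f : Dual k H, ∀ y ∈ rootSpace H f, killingForm k L c y = 0) : c = 0 := by
  apply nondeg (k := k)
  intro y
  have hy : y ∈ ⨆ χ : Weight k H L, genWeightSpace L (χ : H → k) := by
    rw [iSup_genWeightSpace_eq_top' k H L]; trivial
  induction hy using LieSubmodule.iSup_induction' with
  | mem χ x hx => exact h (χ.toLinear k H L) x hx
  | zero => simp
  | add x y _ _ h1 h2 => rw [map_add, h1, h2, add_zero]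

lemma exists_move [IsSimple k L] (c : L) (hc : c ≠ 0) (hcH : ∀ u : H, killingForm k L c u = 0)
    (hV : sp H c ≠ ⊤) :
    ∃ β : Dual k H, β ∉ sp H c ∧ ∃ e ∈ rootSpace H β, ⁅e, c⁆ ≠ 0 := by
  by_contra! hno
  apply hV
  apply RootPairing.IsIrreducible.eq_top_of_invtSubmodule_reflection (P := rootSystem H)
  · intro i
    rw [Module.End.mem_invtSubmodule]
    by_cases hi : (rootSystem H).root i ∈ sp H c
    · intro x hx
      rw [Submodule.mem_comap]
      change (rootSystem H).reflection i x ∈ sp H c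
      rw [RootPairing.reflection_apply]
      exact Submodule.sub_mem _ hx (Submodule.smul_mem _ _ hi)
    · have hi0 : (i : Weight k H L).IsNonZero := H.isNonZero_coe_root i
      obtain ⟨h, e, f, ht, he, hf⟩ := exists_isSl2Triple_of_weight_isNonZero hi0
      have hh := ht.h_eq_coroot hi0 he hf
      have h1 : ⁅e, c⁆ = 0 := hno _ hi e he
      have h2 : ⁅f, c⁆ = 0 := hno (-(rootSystem H).root i)
        (fun hm => hi (by simpa using Submodule.neg_mem _ hm)) f hf
      have h3 : ⁅c, h⁆ = 0 := by
        rw [← lie_skew, ← ht.lie_e_f, lie_lie, h1, h2]; simp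
      unfold sp
      rw [Submodule.span_le]
      rintro α ⟨y, hy, hcy⟩
      have h4 : killingForm k L c ⁅h, y⁆ = 0 := by rw [← kinv, h3]; simp
      have h5 : ⁅h, y⁆ = α (coroot (i : Weight k H L)) • y := by
        rw [hh]; exact lie_eq_smul_of_mem_rootSpace hy _
      rw [h5, map_smul, smul_eq_mul] at h4
      have h6 : α (coroot (i : Weight k H L)) = 0 := (mul_eq_zero.1 h4).resolve_right hcy
      change (rootSystem H).reflection i α ∈ sp H c
      rw [RootPairing.reflection_apply]
      have h7 : (rootSystem H).coroot' i α = 0 := h6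
      rw [h7, zero_smul, sub_zero]
      exact Submodule.subset_span ⟨y, hy, hcy⟩
  · intro hbot
    apply hc
    apply kext H
    intro f y hy
    by_contra hne
    have hf := sp_mem hy hne
    rw [hbot, Submodule.mem_bot] at hf
    subst hf
    have : y ∈ H := by
      have h0 : y ∈ rootSpace H (0 : H → k) := hy
      rw [rootSpace_zero_eq] at h0
      exact h0
    exact hne (hcH ⟨y, this⟩)

lemma exp_eval (c e : L) (β : Dual k H) (hβ : β ∉ sp H c) (he : e ∈ rootSpace H β) :
    ∃ φ : L ≃ₗ⁅k⁆ L, ∀ (δ : Dual k H) (y : L), y ∈ rootSpace H δ →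
      (∀ m : ℕ, 2 ≤ m → m • β + δ ∉ sp H c) →
      killingForm k L (φ c) y = killingForm k L c y + killingForm k L c ⁅e, y⁆ := by
  have hβ0 : (β : H → k) ≠ 0 := fun h => hβ (by
    have : β = 0 := LinearMap.ext fun x => congrFun h x
    rw [this]; exact Submodule.zero_mem _)
  obtain ⟨φ, N, hφ⟩ := exists_exp (k := k) e (isNilpotent_ad_of_mem_rootSpace H hβ0 he)
  refine ⟨φ.symm, fun δ y hy hm => ?_⟩
  have hz : ∀ m : ℕ, 2 ≤ m → killingForm k L c ((ad k L e ^ m) y) = 0 := fun m h2 =>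
    sp_not (hm m h2) (toEnd_pow_apply_mem he hy m)
  have h2 := hz 2 le_rfl
  have h2' : (ad k L e ^ 2) y = ⁅e, ⁅e, y⁆⁆ := by simp [pow_succ]
  rw [h2'] at h2
  rw [kconj, hφ, map_add, map_add, map_add, map_smul, h2, map_sum, Finset.sum_eq_zero]
  · simp
  · intro n _
    rw [map_smul, hz _ (by omega), smul_zero]

lemma not_mem_nsmul {V : Submodule k (Dual k H)} {β δ : Dual k H} (hβ : β ∉ V) (hδ : δ ∈ V)
    (m : ℕ) (hm : m ≠ 0) : m • β + δ ∉ V := by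
  intro h
  apply hβ
  have h1 : m • β ∈ V := by simpa using V.sub_mem h hδ
  rw [← Nat.cast_smul_eq_nsmul k] at h1
  exact (V.smul_mem_iff (Nat.cast_ne_zero.2 hm)).1 h1

lemma phase2_step [IsSimple k L] (c : L) (hc : c ≠ 0) (hcH : ∀ u : H, killingForm k L c u = 0)
    (hV : sp H c ≠ ⊤) :
    ∃ φ : L ≃ₗ⁅k⁆ L, (∀ u : H, killingForm k L (φ c) u = 0) ∧ sp H c < sp H (φ c) := by
  obtain ⟨β, hβ, e, he, hec⟩ := exists_move c hc hcH hV
  obtain ⟨φ, hφ⟩ := exp_eval c e β hβ he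
  have hfix : ∀ δ ∈ sp H c, ∀ y ∈ rootSpace H δ,
      killingForm k L (φ c) y = killingForm k L c y := by
    intro δ hδ y hy
    rw [hφ δ y hy fun m h2 => not_mem_nsmul hβ hδ m (by omega)]
    have h1 := not_mem_nsmul hβ hδ 1 one_ne_zero
    rw [one_smul] at h1
    rw [sp_not h1 (lie_mem_genWeightSpace_of_mem_genWeightSpace he hy), add_zero]
  obtain ⟨γ, y, hy, hne⟩ : ∃ γ : Dual k H, ∃ y ∈ rootSpace H γ,
      killingForm k L c ⁅e, y⁆ ≠ 0 := by
    by_contra! hno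
    apply hec
    rw [← lie_skew, neg_eq_zero]
    apply kext H
    intro f y hy
    rw [kinv]
    exact hno f y hy
  have hβγ : β + γ ∈ sp H c := sp_mem (lie_mem_genWeightSpace_of_mem_genWeightSpace he hy) hne
  have hγ : γ ∉ sp H c := fun h => hβ (by simpa using Submodule.sub_mem _ hβγ h)
  refine ⟨φ, fun u => ?_, lt_of_le_of_ne ?_ ?_⟩
  · rw [hfix 0 (Submodule.zero_mem _) u, hcH u]
    change (u : L) ∈ rootSpace H (0 : H → k)
    rw [rootSpace_zero_eq]
    exact u.2
  · conv_lhs => unfold sp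
    rw [Submodule.span_le]
    rintro α ⟨z, hz, hcz⟩
    exact sp_mem hz (by rwa [hfix α (sp_mem hz hcz) z hz])
  · intro heq
    apply hγ
    rw [heq]
    refine sp_mem hy ?_
    rw [hφ γ y hy, sp_not hγ hy, zero_add]
    · exact hne
    · intro m h2
      have := not_mem_nsmul hβ hβγ (m - 1) (by omega)
      rwa [← add_assoc, ← succ_nsmul, Nat.sub_add_cancel (by omega)] at this

lemma phase2 [IsSimple k L] (n : ℕ) : ∀ c : L, c ≠ 0 → (∀ u : H, killingForm k L c u = 0) →
    finrank k (Dual k H) - finrank k (sp H c) ≤ n →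
    ∃ φ : L ≃ₗ⁅k⁆ L, (∀ u : H, killingForm k L (φ c) u = 0) ∧ sp H (φ c) = ⊤ := by
  induction n with
  | zero =>
    intro c hc hcH hn
    refine ⟨LieEquiv.refl, hcH, Submodule.eq_top_of_finrank_eq
      (le_antisymm (Submodule.finrank_le _) ?_)⟩
    change _ ≤ finrank k (sp H c)
    omega
  | succ n ih =>
    intro c hc hcH hn
    by_cases hV : sp H c = ⊤
    · exact ⟨LieEquiv.refl, hcH, hV⟩
    obtain ⟨φ, h1, h2⟩ := phase2_step c hc hcH hV
    have h3 := Submodule.finrank_lt_finrank_of_lt h2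
    obtain ⟨ψ, h4, h5⟩ := ih (φ c) (by simpa using hc) h1 (by omega)
    exact ⟨φ.trans ψ, h4, h5⟩

lemma final (a c : L) [(LieSubalgebra.engel k a).IsCartanSubalgebra]
    [IsTriangularizable k (LieSubalgebra.engel k a) L]
    (hcH : ∀ u : LieSubalgebra.engel k a, killingForm k L c u = 0)
    (hV : sp (LieSubalgebra.engel k a) c = ⊤) :
    ∃ b : L, c = ⁅a, b⁆ ∧ ∀ x : L, ⁅a, x⁆ = 0 → ⁅b, x⁆ = 0 → x = 0 := by
  have hker : ∀ x : L, ⁅a, x⁆ = 0 → x ∈ LieSubalgebra.engel k a := by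
    intro x hx
    rw [LieSubalgebra.mem_engel_iff]
    exact ⟨1, by simpa using hx⟩
  have hran : c ∈ LinearMap.range (ad k L a) := by
    by_contra hw
    obtain ⟨f, hf, hf2⟩ := Submodule.exists_dual_map_eq_bot_of_notMem hw inferInstance
    obtain ⟨x, hx⟩ := functional f
    have hxa : ⁅a, x⁆ = 0 := by
      rw [← lie_skew, neg_eq_zero]
      apply nondeg (k := k)
      intro y
      rw [kinv, ← hx]
      have : f ⁅a, y⁆ ∈ Submodule.map f (LinearMap.range (ad k L a)) :=
        Submodule.mem_map_of_mem ⟨y, rfl⟩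
      rw [hf2] at this; simpa using this
    apply hf
    rw [hx, ksymm]
    exact hcH ⟨x, hker x hxa⟩
  obtain ⟨b, hb⟩ := hran
  rw [ad_apply] at hb
  refine ⟨b, hb.symm, fun x hax hbx => ?_⟩
  have hcx : ⁅c, x⁆ = 0 := by rw [← hb, lie_lie, hax, hbx]; simp
  let u : LieSubalgebra.engel k a := ⟨x, hker x hax⟩
  have hall : ∀ f ∈ sp (LieSubalgebra.engel k a) c, f u = 0 := by
    intro f hf
    unfold sp at hf
    induction hf using Submodule.span_induction with
    | mem α hα =>
      obtain ⟨y, hy, hcy⟩ := hα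
      have h4 : killingForm k L c ⁅x, y⁆ = 0 := by rw [← kinv, hcx]; simp
      have h5 : ⁅x, y⁆ = α u • y := lie_eq_smul_of_mem_rootSpace hy u
      rw [h5, map_smul, smul_eq_mul] at h4
      exact (mul_eq_zero.1 h4).resolve_right hcy
    | zero => simp
    | add x y _ _ h1 h2 => rw [LinearMap.add_apply, h1, h2, add_zero]
    | smul r x _ h => rw [LinearMap.smul_apply, h, smul_zero]
  have hu : u = 0 := by
    rw [← Module.forall_dual_apply_eq_zero_iff k]
    intro f
    exact hall f (by rw [hV]; trivial)
  exact congrArg Subtype.val hu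

end Phase2

lemma star (k : Type*) [Field k] [IsAlgClosed k] [CharZero k]
    (L : Type*) [LieRing L] [LieAlgebra k L] [FiniteDimensional k L]
    [LieAlgebra.IsSimple k L] (c : L) (hc : c ≠ 0) :
    ∃ a b : L, c = ⁅a, b⁆ ∧ ∀ x : L, ⁅a, x⁆ = 0 → ⁅b, x⁆ = 0 → x = 0 := by
  haveI : LieAlgebra.IsKilling k L := inferInstance
  obtain ⟨a, ha⟩ := LieAlgebra.exists_isCartanSubalgebra_engel k L
  obtain ⟨φ, hφ⟩ := phase1 (H := LieSubalgebra.engel k a) _ Set.univ le_rfl c (by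
    intro u hu
    have : u = 0 := by
      rw [← Module.forall_dual_apply_eq_zero_iff k]
      intro f
      have hf : f ∈ Submodule.span k (Set.range
          (LieAlgebra.IsKilling.rootSystem (LieSubalgebra.engel k a)).root) := by
        rw [RootPairing.IsRootSystem.span_root_eq_top]; trivial
      induction hf using Submodule.span_induction with
      | mem x hx => obtain ⟨i, rfl⟩ := hx; exact hu i trivial
      | zero => simp
      | add x y _ _ h1 h2 => rw [LinearMap.add_apply, h1, h2, add_zero]
      | smul r x _ h => rw [LinearMap.smul_apply, h, smul_zero]
    rw [this]; simp)
  obtain ⟨ψ, h1, h2⟩ := phase2 (H := LieSubalgebra.engel k a) _ (φ c) (by simpa using hc) hφ le_rfl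
  obtain ⟨b, hb, hx⟩ := final a (ψ (φ c)) h1 h2
  let χ := φ.trans ψ
  have hχ : χ c = ⁅a, b⁆ := hb
  refine ⟨χ.symm a, χ.symm b, ?_, fun x h3 h4 => ?_⟩
  · rw [← LieEquiv.map_lie, ← hχ, LieEquiv.symm_apply_apply]
  · have h5 := hx (χ x)
      (by rw [← LieEquiv.apply_symm_apply χ a, ← LieEquiv.map_lie, h3, map_zero])
      (by rw [← LieEquiv.apply_symm_apply χ b, ← LieEquiv.map_lie, h4, map_zero])
    simpa using congrArg χ.symm h5

end WidthOne

/-- The current Lie algebra `𝔤 ⊗ k[[t]]` has bracket width 1 (every element is a single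
Lie bracket) if and only if `𝔤` satisfies condition (*): every nonzero `c ∈ 𝔤` is a
bracket `c = ⁅a, b⁆` of elements with trivial common centralizer. -/
theorem width_one_iff_condition_star
    (k : Type*) [Field k] [IsAlgClosed k] [CharZero k]
    (𝔤 : Type*) [LieRing 𝔤] [LieAlgebra k 𝔤] [FiniteDimensional k 𝔤]
    [LieAlgebra.IsSimple k 𝔤] :
    (∀ z : PowerSeries k ⊗[k] 𝔤, ∃ x y : PowerSeries k ⊗[k] 𝔤, z = ⁅x, y⁆) ↔
      (∀ c : 𝔤, c ≠ 0 → ∃ a b : 𝔤, c = ⁅a, b⁆ ∧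
        ∀ x : 𝔤, ⁅a, x⁆ = 0 → ⁅b, x⁆ = 0 → x = 0) := by

  constructor
  · intro _ c hc
    exact WidthOne.star k 𝔤 c hc
  · exact fun h z => WidthOne.star_imp_width h z
end

section
/- Let k be an algebraically closed field of characteristic zero. Every element z of the current Lie algebra sl₂(k) ⊗ k[[t]] can be written as a single Lie bracket: there exist x, y ∈ sl₂(k) ⊗ k[[t]] with z = [x, y]. (Thus the bracket width of sl₂(k) ⊗ k[[t]] is 1.) -/
open scoped TensorProduct

/-- Over a valuation ring every vector of length three is a cross product. -/
theorem exists_cross_of_valuationRing {R : Type*} [CommRing R] [IsDomain R] [ValuationRing R]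
    (a b c : R) : ∃ p q r p' q' r' : R,
      q * r' - r * q' = a ∧ r * p' - p * r' = b ∧ p * q' - q * p' = c := by
  have key : (a ∣ b ∧ a ∣ c) ∨ (b ∣ a ∧ b ∣ c) ∨ (c ∣ a ∧ c ∣ b) := by
    rcases ValuationRing.dvd_total a b with h1 | h1 <;>
    rcases ValuationRing.dvd_total b c with h2 | h2 <;>
    rcases ValuationRing.dvd_total a c with h3 | h3
    · exact Or.inl ⟨h1, h3⟩
    · exact Or.inl ⟨h1, h1.trans h2⟩
    · exact Or.inl ⟨h1, h3⟩
    · exact Or.inr (Or.inr ⟨h3, h2⟩)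
    · exact Or.inr (Or.inl ⟨h1, h2⟩)
    · exact Or.inr (Or.inl ⟨h1, h2⟩)
    · exact Or.inr (Or.inr ⟨h2.trans h1, h2⟩)
    · exact Or.inr (Or.inr ⟨h3, h2⟩)
  rcases key with ⟨⟨u, rfl⟩, ⟨v, rfl⟩⟩ | ⟨⟨u, rfl⟩, ⟨v, rfl⟩⟩ | ⟨⟨u, rfl⟩, ⟨v, rfl⟩⟩
  · exact ⟨-(a * u), a, 0, -v, 0, 1, by ring, by ring, by ring⟩
  · exact ⟨-b, b * u, 0, 0, -v, 1, by ring, by ring, by ring⟩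
  · exact ⟨c, 0, -(c * u), 0, 1, -v, by ring, by ring, by ring⟩

/-- The bracket of two combinations of an `sl₂` triple, after extension of scalars. -/
theorem extend_bracket_formula {k A L : Type*} [CommRing k] [CommRing A] [Algebra k A]
    [LieRing L] [LieAlgebra k L] {e h f : L} (hhe : ⁅h, e⁆ = (2 : k) • e)
    (hhf : ⁅h, f⁆ = (-2 : k) • f) (hef : ⁅e, f⁆ = h) (p q r p' q' r' : A) :
    ⁅p ⊗ₜ[k] e + q ⊗ₜ[k] h + r ⊗ₜ[k] f, p' ⊗ₜ[k] e + q' ⊗ₜ[k] h + r' ⊗ₜ[k] f⁆ =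
      ((2 : k) • (q * p') + (-2 : k) • (p * q')) ⊗ₜ[k] e +
      (p * r' + (-1 : k) • (r * p')) ⊗ₜ[k] h +
      ((2 : k) • (r * q') + (-2 : k) • (q * r')) ⊗ₜ[k] f := by
  have heh : ⁅e, h⁆ = (-2 : k) • e := by rw [← lie_skew, hhe, neg_smul]
  have hfh : ⁅f, h⁆ = (2 : k) • f := by rw [← lie_skew, hhf, neg_smul, neg_neg]
  have hfe : ⁅f, e⁆ = (-1 : k) • h := by rw [← lie_skew, hef, neg_smul, one_smul]
  simp only [add_lie, lie_add, LieAlgebra.ExtendScalars.bracket_tmul, lie_self, hhe, hhf, hef,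
    heh, hfh, hfe, TensorProduct.tmul_zero, TensorProduct.add_tmul, TensorProduct.smul_tmul]
  abel

/-- Every element of the current Lie algebra `sl₂(k) ⊗ k[[t]]` is a single Lie bracket. -/
theorem sl2_powerSeries_width_one
    (k : Type*) [Field k] [IsAlgClosed k] [CharZero k]
    (z : PowerSeries k ⊗[k] (LieAlgebra.SpecialLinear.sl (Fin 2) k)) :
    ∃ x y : PowerSeries k ⊗[k] (LieAlgebra.SpecialLinear.sl (Fin 2) k), z = ⁅x, y⁆ := by
  obtain ⟨e, he⟩ : ∃ e : LieAlgebra.SpecialLinear.sl (Fin 2) k, e.1 = !![0, 1; 0, 0] :=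
    ⟨⟨!![0, 1; 0, 0], by
      change Matrix.trace (!![0, 1; 0, 0] : Matrix (Fin 2) (Fin 2) k) = 0
      simp [Matrix.trace_fin_two]⟩, rfl⟩
  obtain ⟨f, hf⟩ : ∃ e : LieAlgebra.SpecialLinear.sl (Fin 2) k, e.1 = !![0, 0; 1, 0] :=
    ⟨⟨!![0, 0; 1, 0], by
      change Matrix.trace (!![0, 0; 1, 0] : Matrix (Fin 2) (Fin 2) k) = 0
      simp [Matrix.trace_fin_two]⟩, rfl⟩
  obtain ⟨h, hh⟩ : ∃ e : LieAlgebra.SpecialLinear.sl (Fin 2) k, e.1 = !![1, 0; 0, -1] :=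
    ⟨⟨!![1, 0; 0, -1], by
      change Matrix.trace (!![1, 0; 0, -1] : Matrix (Fin 2) (Fin 2) k) = 0
      simp [Matrix.trace_fin_two]⟩, rfl⟩
  have hhe : ⁅h, e⁆ = (2 : k) • e := by
    apply Subtype.ext
    change _ = (2 : k) • e.1
    rw [LieAlgebra.SpecialLinear.sl_bracket, he, hh]
    ext i j; fin_cases i <;> fin_cases j <;> simp; norm_num
  have hhf : ⁅h, f⁆ = (-2 : k) • f := by
    apply Subtype.ext
    change _ = (-2 : k) • f.1
    rw [LieAlgebra.SpecialLinear.sl_bracket, hf, hh]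
    ext i j; fin_cases i <;> fin_cases j <;> simp; norm_num
  have hef : ⁅e, f⁆ = h := by
    apply Subtype.ext
    rw [LieAlgebra.SpecialLinear.sl_bracket, hf, he, hh]
    ext i j; fin_cases i <;> fin_cases j <;> simp
  have hz : ∃ a b c : PowerSeries k, z = a ⊗ₜ[k] e + b ⊗ₜ[k] h + c ⊗ₜ[k] f := by
    induction z using TensorProduct.induction_on with
    | zero => exact ⟨0, 0, 0, by simp⟩
    | add x y hx hy =>
      obtain ⟨a, b, c, rfl⟩ := hx
      obtain ⟨a', b', c', rfl⟩ := hy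
      exact ⟨a + a', b + b', c + c', by simp only [TensorProduct.add_tmul]; abel⟩
    | tmul s m =>
      have hm : m = m.1 0 1 • e + m.1 0 0 • h + m.1 1 0 • f := by
        have ht := (show Matrix.trace m.1 = 0 from m.2)
        rw [Matrix.trace_fin_two] at ht
        apply Subtype.ext
        change m.1 = m.1 0 1 • e.1 + m.1 0 0 • h.1 + m.1 1 0 • f.1
        rw [he, hf, hh]
        ext i j; fin_cases i <;> fin_cases j <;> simp
        linear_combination ht
      refine ⟨m.1 0 1 • s, m.1 0 0 • s, m.1 1 0 • s, ?_⟩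
      simp only [TensorProduct.smul_tmul]
      rw [← TensorProduct.tmul_add, ← TensorProduct.tmul_add, ← hm]
  obtain ⟨a, b, c, rfl⟩ := hz
  obtain ⟨p, q, r, p', q', r', h1, h2, h3⟩ :=
    exists_cross_of_valuationRing (-((2⁻¹ : k) • c)) (-b) (-((2⁻¹ : k) • a))
  have two : (2 : k) ≠ 0 := two_ne_zero
  have ea : a = (2 : k) • (q * p') + (-2 : k) • (p * q') := by
    have : a = (2 : k) • ((2⁻¹ : k) • a) := by rw [smul_smul, mul_inv_cancel₀ two, one_smul]
    rw [this, ← neg_neg ((2⁻¹ : k) • a), ← h3, neg_smul, ← sub_eq_add_neg, ← smul_sub, neg_sub]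
  have ec : c = (2 : k) • (r * q') + (-2 : k) • (q * r') := by
    have : c = (2 : k) • ((2⁻¹ : k) • c) := by rw [smul_smul, mul_inv_cancel₀ two, one_smul]
    rw [this, ← neg_neg ((2⁻¹ : k) • c), ← h1, neg_smul, ← sub_eq_add_neg, ← smul_sub, neg_sub]
  have eb : b = p * r' + (-1 : k) • (r * p') := by
    rw [neg_smul, one_smul]; linear_combination h2
  refine ⟨p ⊗ₜ[k] e + q ⊗ₜ[k] h + r ⊗ₜ[k] f, p' ⊗ₜ[k] e + q' ⊗ₜ[k] h + r' ⊗ₜ[k] f, ?_⟩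
  rw [ea, eb, ec]
  exact (extend_bracket_formula hhe hhf hef p q r p' q' r').symm
end
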